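/- For all positive integers m and w, every n-Grundy coloring of a finite L_m-free poset of width at most w satisfies n ≤ w^{2.5·lg(2w) + 2·lg m}, where lg denotes the base-2 logarithm. Equivalently, First-Fit uses at most w^{2.5·lg(2w) + 2·lg m} chains on any L_m-free on-line poset of width w. -/

import Mathlib

/-- `S` is an antichain with respect to the order relation `le`. -/
def IsAntichainOn {α : Type*} (le : α → α → Prop) (S : Finset α) : Prop :=
  ∀ a ∈ S, ∀ b ∈ S, a ≠ b → ¬ le a b ∧ ¬ le b a

/-- The poset `(α, le)` has width `w`: there is an antichain of size `w`
and every antichain has size at most `w`. -/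
def IsWidth {α : Type*} (le : α → α → Prop) (w : ℕ) : Prop :=
  (∃ S : Finset α, IsAntichainOn le S ∧ S.card = w) ∧
    ∀ S : Finset α, IsAntichainOn le S → S.card ≤ w

/-- `g` is an `n`-Grundy coloring of the poset `(α, le)`:
`g` takes values in `{1,…,n}`, is surjective onto `{1,…,n}`,
each color class is a chain (G1), and each vertex of color `j`
has an incomparable witness of every smaller color (G3). -/
def IsGrundy {α : Type*} (le : α → α → Prop) (n : ℕ) (g : α → ℕ) : Prop :=
  (∀ v, 1 ≤ g v ∧ g v ≤ n) ∧
  (∀ i, 1 ≤ i → i ≤ n → ∃ v, g v = i) ∧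
  (∀ u v, g u = g v → le u v ∨ le v u) ∧
  (∀ v i, 1 ≤ i → i < g v → ∃ u, (¬ le u v ∧ ¬ le v u) ∧ g u = i)

/-- `c` is the First-Fit chain partition of the poset `(α, le)` presented in the
strict total order `prec`: every vertex `v` gets the least color `c v ≥ 1` such
that all `prec`-earlier vertices of the same color are comparable to `v`. -/
def IsFFColoring {α : Type*} (le prec : α → α → Prop) (c : α → ℕ) : Prop :=
  ∀ v, 1 ≤ c v ∧
    (∀ u, prec u v → c u = c v → le u v ∨ le v u) ∧
    (∀ j, 1 ≤ j → j < c v → ∃ u, prec u v ∧ c u = j ∧ ¬ le u v ∧ ¬ le v u)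

/-- The sequences `x` (lower leg) and `y` (upper leg) form an induced copy of
the `m`-ladder `L_m` in the poset `(α, le)`. -/
def IsLadderIn {α : Type*} (le : α → α → Prop) {m : ℕ} (x y : Fin m → α) : Prop :=
  (∀ i j : Fin m, i < j → le (x i) (x j) ∧ x i ≠ x j) ∧
  (∀ i j : Fin m, i < j → le (y i) (y j) ∧ y i ≠ y j) ∧
  (∀ i : Fin m, le (x i) (y i) ∧ x i ≠ y i) ∧
  (∀ i j : Fin m, i < j → ¬ le (y i) (x j) ∧ ¬ le (x j) (y i))

/-- The poset `(α, le)` contains no induced copy of the `m`-ladder `L_m`. -/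
def LFree {α : Type*} (le : α → α → Prop) (m : ℕ) : Prop :=
  ¬ ∃ x y : Fin m → α, IsLadderIn le x y

/-- `A ⊑ B`: every element of `A` is `le`-below some element of `B`. -/
def Below {α : Type*} (le : α → α → Prop) (A B : Finset α) : Prop :=
  ∀ a ∈ A, ∃ b ∈ B, le a b

/-- `A ⊏ B`: `A ⊑ B` and `A ≠ B`. -/
def StrictBelow {α : Type*} (le : α → α → Prop) (A B : Finset α) : Prop :=
  Below le A B ∧ A ≠ B

/-- The bipartite poset induced by antichains `A` and `B` (with `A` below `B`)
is a core: `|A| = |B|` and every comparable pair `x ≤ y` with `x ∈ A`, `y ∈ B`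
is a Dilworth edge, i.e. belongs to a perfect matching of comparable pairs. -/
def IsCore {α : Type*} (le : α → α → Prop) (A B : Finset α) : Prop :=
  A.card = B.card ∧
    ∀ x ∈ A, ∀ y ∈ B, le x y →
      ∃ f : α → α, Set.BijOn f ↑A ↑B ∧ (∀ a ∈ A, le a (f a)) ∧ f x = y

/-- `A j = A_{s(i)}`: among the antichains presented before `A i`, it is the
`⊑`-least one strictly above `A i`. -/
def IsSuccIdx {α : Type*} (le : α → α → Prop) {n : ℕ} (A : Fin n → Finset α)
    (i j : Fin n) : Prop :=
  j < i ∧ StrictBelow le (A i) (A j) ∧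
    ∀ k : Fin n, k < i → StrictBelow le (A i) (A k) → Below le (A j) (A k)

/-- `A j = A_{p(i)}`: among the antichains presented before `A i`, it is the
`⊑`-greatest one strictly below `A i`. -/
def IsPredIdx {α : Type*} (le : α → α → Prop) {n : ℕ} (A : Fin n → Finset α)
    (i j : Fin n) : Prop :=
  j < i ∧ StrictBelow le (A j) (A i) ∧
    ∀ k : Fin n, k < i → StrictBelow le (A k) (A i) → Below le (A k) (A j)

/-- `(P, A_1, …, A_n)` is a regular poset of width `w`: the `A i` are pairwise
disjoint maximum antichains (each of size `w`, the width of `P`) covering `P`,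
linearly ordered by `⊑`; consecutive-at-presentation-time pairs induce cores
(R4); and every comparability with an earlier antichain factors through the
`⊑`-neighbors at presentation time (R5). -/
def IsRegularPoset {α : Type*} (le : α → α → Prop) (w : ℕ) {n : ℕ}
    (A : Fin n → Finset α) : Prop :=
  (∀ v : α, ∃ i, v ∈ A i) ∧
  (∀ i j : Fin n, i ≠ j → ∀ v ∈ A i, v ∉ A j) ∧
  (∀ i, IsAntichainOn le (A i)) ∧
  (∀ i, (A i).card = w) ∧
  IsWidth le w ∧
  (∀ i j : Fin n, Below le (A i) (A j) ∨ Below le (A j) (A i)) ∧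
  (∀ i j : Fin n, IsSuccIdx le A i j → IsCore le (A i) (A j)) ∧
  (∀ i j : Fin n, IsPredIdx le A i j → IsCore le (A j) (A i)) ∧
  (∀ (i j : Fin n) (x y : α), x ∈ A i → y ∈ A j → le x y → x ≠ y →
    (j < i → ∃ k, IsSuccIdx le A i k ∧ ∃ z ∈ A k, le x z ∧ x ≠ z ∧ le z y) ∧
    (i < j → ∃ k, IsPredIdx le A j k ∧ ∃ z ∈ A k, le x z ∧ le z y ∧ z ≠ y))

/-- `x` is an ascending chain: increasing both in the poset and in color. -/
def IsAscending {α : Type*} (le : α → α → Prop) (g : α → ℕ) {k : ℕ}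
    (x : Fin k → α) : Prop :=
  ∀ i j : Fin k, i < j → (le (x i) (x j) ∧ x i ≠ x j) ∧ g (x i) < g (x j)

/-- `x` is a descending chain: decreasing in the poset, increasing in color. -/
def IsDescending {α : Type*} (le : α → α → Prop) (g : α → ℕ) {k : ℕ}
    (x : Fin k → α) : Prop :=
  ∀ i j : Fin k, i < j → (le (x j) (x i) ∧ x i ≠ x j) ∧ g (x i) < g (x j)

/-- The order of the lexicographic product `P · Q`. -/
def LexLe {α β : Type*} (leP : α → α → Prop) (leQ : β → β → Prop) :
    α × β → α × β → Prop :=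
  fun a b => (leP a.1 b.1 ∧ a.1 ≠ b.1) ∨ (a.1 = b.1 ∧ leQ a.2 b.2)

/-!
Induct on the width `w`. Take the largest color `c` such that the elements of color at least `c`
still have width `w`. They contain an antichain `A` of size `w`, and the elements of color above `c`
have smaller width. Each color below `c` passes from under `A` to over `A` across a gap `p < r` of
two consecutive elements of its class, with no element of `A` between them. Hence, up to duality, at
most half of `A` lies above `p`. For a family of colors whose gap ends form chains, the elements
incomparable to a suitable part of `A` then form a convex region of width at most `w / 2` that meets
every class of the family.

The coloring induced on that region need not be Grundy, since witnesses may lie outside. They do lie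
inside when the least element of a class in the region increases with the color and the greatest one
decreases. Ladder-freeness provides many such colors, because gaps whose color and lower (dually,
upper) end increase (decrease) together form a ladder. This yields the recursion
`F w ≤ F (w - 1) + 1 + w ^ 4 * m ^ 2 * F (w / 2)`, which the stated bound satisfies because
`B w = w ^ 5 * m ^ 2 * B (w / 2)` for `B w = w ^ (2.5 * lg (2 * w) + 2 * lg m)`.
-/

section Width

variable {α : Type*} [PartialOrder α] {Q A B : Finset α} {w h : ℕ}

/-- `HasWidthLE Q w`: the subposet induced on the finite set `Q` has width at most `w`. -/
def HasWidthLE (Q : Finset α) (w : ℕ) : Prop :=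
  ∀ ⦃S : Finset α⦄, S ⊆ Q → IsAntichain (· ≤ ·) (S : Set α) → S.card ≤ w

theorem HasWidthLE.mono {Q' : Finset α} (hQ : HasWidthLE Q w) (h : Q' ⊆ Q) : HasWidthLE Q' w :=
  fun _ hS hanti => hQ (hS.trans h) hanti

theorem HasWidthLE.dual (hQ : HasWidthLE Q w) : HasWidthLE (α := αᵒᵈ) Q w :=
  fun _ hS hanti => hQ hS hanti.swap

open Classical in
-- In a set `S` the elements lying above no other element of `S` form an antichain, so Hall's
-- condition for the relation `<` fails by at most `w`, and `w` dummy targets repair it.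
theorem HasWidthLE.exists_injective (hQ : HasWidthLE Q w) :
    ∃ φ : Q → Q ⊕ Fin w, φ.Injective ∧ ∀ x y, φ x = .inl y → x < y := by
  obtain ⟨φ, hinj, hφ⟩ := (Fintype.all_card_le_filter_rel_iff_exists_injective
    (fun (x : Q) (b : Q ⊕ Fin w) => ∀ y, b = .inl y → x < y)).1 fun S => by
    rcases S.eq_empty_or_nonempty with rfl | ⟨x₀, hx₀⟩
    · simp
    let N : Finset Q := {y | ∃ x ∈ S, x < y}
    have hmin : (S \ N).card ≤ w := by
      rw [← Finset.card_map (Function.Embedding.subtype _)]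
      refine hQ (Finset.map_subtype_subset _) ?_
      rw [Finset.coe_map]
      rintro _ ⟨a, ha, rfl⟩ _ ⟨b, hb, rfl⟩ hne hle
      have hab : a < b := lt_of_le_of_ne hle fun h => hne (congrArg _ h)
      exact (Finset.mem_sdiff.1 hb).2 <|
        Finset.mem_filter.2 ⟨Finset.mem_univ b, a, (Finset.mem_sdiff.1 ha).1, hab⟩
    calc S.card ≤ (S \ N).card + N.card := Finset.card_le_card_sdiff_add_card
      _ ≤ w + N.card := by gcongr
      _ = (N.disjSum (Finset.univ : Finset (Fin w))).card := by simp [add_comm]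
      _ ≤ _ := Finset.card_le_card fun b hb => by
        rcases Finset.mem_disjSum.1 hb with ⟨y, hy, rfl⟩ | ⟨i, -, rfl⟩
        · obtain ⟨x, hx, hxy⟩ := (Finset.mem_filter.1 hy).2
          exact Finset.mem_filter.2 ⟨Finset.mem_univ _, x, hx, by rintro _ ⟨⟩; exact hxy⟩
        · exact Finset.mem_filter.2 ⟨Finset.mem_univ _, x₀, hx₀, by rintro _ ⟨⟩⟩
  exact ⟨φ, hinj, hφ⟩

-- The injection gives every element a private successor or one of `w` labels. Following
-- successors leads to a label, and predecessors being unique, equal labels mean equal chains.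
theorem HasWidthLE.exists_chain_cover (hQ : HasWidthLE Q w) :
    ∃ C : Fin w → Set α, (∀ i, IsChain (· ≤ ·) (C i)) ∧ ∀ x ∈ Q, ∃ i, x ∈ C i := by
  obtain ⟨φ, hinj, hlt⟩ := hQ.exists_injective
  let Pred (y x : Q) : Prop := φ x = .inl y
  have hunique : Relator.RightUnique Pred := fun _ _ _ hx hx' => hinj (hx.trans hx'.symm)
  have hle {x y : Q} (h : Relation.ReflTransGen Pred y x) : (x : α) ≤ y := by
    induction h with
    | refl => exact le_rfl
    | tail _ h ih => exact (hlt _ _ h).le.trans ih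
  have hlabel (x : Q) : ∃ i e, Relation.ReflTransGen Pred e x ∧ φ e = .inr i := by
    induction x using WellFoundedGT.induction with
    | ind x ih =>
      rcases hx : φ x with y | i
      · obtain ⟨i, e, hey, he⟩ := ih y (hlt x y hx)
        exact ⟨i, e, hey.tail hx, he⟩
      · exact ⟨i, x, .refl, hx⟩
  refine ⟨fun i => {x | ∃ (hx : x ∈ Q) (e : Q),
    Relation.ReflTransGen Pred e ⟨x, hx⟩ ∧ φ e = .inr i}, ?_, fun x hx => ?_⟩
  · rintro i x ⟨hx, e, hex, he⟩ y ⟨hy, e', hey, he'⟩ -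
    obtain rfl : e = e' := hinj (he.trans he'.symm)
    exact (hex.total_of_right_unique hunique hey).symm.imp hle hle
  · obtain ⟨i, e, hex, he⟩ := hlabel ⟨x, hx⟩
    exact ⟨i, hx, e, hex, he⟩

open Classical in
theorem HasWidthLE.card_le_mul_of_isChain {ι : Type*} (hQ : HasWidthLE Q w) {M : Finset ι}
    {p : ι → α} (hp : ∀ c ∈ M, p c ∈ Q) {N : ℕ}
    (hN : ∀ M' ⊆ M, IsChain (· ≤ ·) (p '' M') → M'.card ≤ N) : M.card ≤ N * w := by
  obtain ⟨C, hC, hcover⟩ := hQ.exists_chain_cover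
  have hM : M ⊆ Finset.univ.biUnion fun i => {c ∈ M | p c ∈ C i} := fun c hc => by
    simpa [hc] using hcover _ (hp c hc)
  calc M.card ≤ _ := Finset.card_le_card hM
    _ ≤ (Finset.univ : Finset (Fin w)).card * N := Finset.card_biUnion_le_card_mul _ _ _ fun i _ =>
      hN _ (Finset.filter_subset _ _) <| (hC i).mono <| Set.image_subset_iff.2 fun c hc =>
        (Finset.mem_filter.1 hc).2
    _ = N * w := by rw [Finset.card_fin, mul_comm]

theorem HasWidthLE.exists_le_or_le (hQ : HasWidthLE Q A.card) (hAQ : A ⊆ Q)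
    (hA : IsAntichain (· ≤ ·) (A : Set α)) {t : α} (ht : t ∈ Q) : ∃ a ∈ A, t ≤ a ∨ a ≤ t := by
  classical
  by_contra! hinc
  have htA : t ∉ A := fun hmem => (hinc t hmem).1 le_rfl
  have hanti : IsAntichain (· ≤ ·) ((insert t A : Finset α) : Set α) := by
    rw [Finset.coe_insert]
    exact hA.insert (fun a ha _ => (hinc a ha).2) fun a ha _ => (hinc a ha).1
  have hcard := hQ (Finset.insert_subset ht hAQ) hanti
  rw [Finset.card_insert_of_notMem htA] at hcard
  omega

open Classical in
theorem HasWidthLE.filter_incompRel (hQ : HasWidthLE Q (h + B.card)) (hBQ : B ⊆ Q)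
    (hB : IsAntichain (· ≤ ·) (B : Set α)) :
    HasWidthLE {y ∈ Q | ∀ b ∈ B, IncompRel (· ≤ ·) y b} h := by
  intro S hS hanti
  have hinc (y) (hy : y ∈ S) (b) (hb : b ∈ B) : IncompRel (· ≤ ·) y b :=
    (Finset.mem_filter.1 (hS hy)).2 b hb
  have hdisj : Disjoint S B :=
    Finset.disjoint_left.2 fun b hbS hbB => (hinc b hbS b hbB).not_le le_rfl
  have hunion : IsAntichain (· ≤ ·) ((S ∪ B : Finset α) : Set α) := by
    rw [Finset.coe_union, isAntichain_union]
    exact ⟨hanti, hB, fun y hy b hb _ => ⟨(hinc y hy b hb).not_le, (hinc y hy b hb).not_ge⟩⟩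
  have hcard := hQ (Finset.union_subset (hS.trans (Finset.filter_subset _ _)) hBQ) hunion
  rw [Finset.card_union_of_disjoint hdisj] at hcard
  omega

end Width

open Classical in
-- Mirsky's theorem, in pigeonhole form: the elements with no `r`-predecessor in `M` form an
-- independent set, and deleting them shortens every chain.
theorem card_le_mul_of_forall_not_rel {ι : Type*} {r : ι → ι → Prop} [IsTrans ι r] {N k : ℕ}
    {M : Finset ι} (hchain : ¬ ∃ c : Fin (k + 1) → ι, (∀ i, c i ∈ M) ∧ ∀ i j, i < j → r (c i) (c j))
    (hN : ∀ M' ⊆ M, (∀ i ∈ M', ∀ j ∈ M', ¬ r i j) → M'.card ≤ N) : M.card ≤ N * k := by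
  induction k generalizing M with
  | zero =>
    rcases M.eq_empty_or_nonempty with rfl | ⟨c, hc⟩
    · simp
    · exact absurd ⟨fun _ => c, fun _ => hc, fun i j hij => by omega⟩ hchain
  | succ k ih =>
    let M₁ : Finset ι := {j ∈ M | ∃ i ∈ M, r i j}
    have hM₁ : M₁ ⊆ M := Finset.filter_subset _ _
    have hrest : (M \ M₁).card ≤ N := hN _ Finset.sdiff_subset fun i hi j hj hij =>
      (Finset.mem_sdiff.1 hj).2 <|
        Finset.mem_filter.2 ⟨(Finset.mem_sdiff.1 hj).1, i, (Finset.mem_sdiff.1 hi).1, hij⟩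
    have hcard : M₁.card ≤ N * k := by
      refine ih (fun ⟨c, hc, hr⟩ => hchain ?_) fun M' hM' => hN M' (hM'.trans hM₁)
      obtain ⟨c₀, hc₀, hc₀r⟩ := (Finset.mem_filter.1 (hc 0)).2
      have hc₀' (j) : r c₀ (c j) := by
        rcases eq_or_ne j 0 with rfl | hj
        · exact hc₀r
        · exact _root_.trans hc₀r (hr 0 j (Fin.pos_of_ne_zero hj))
      refine ⟨Fin.cons c₀ c, Fin.cases hc₀ fun i => hM₁ (hc i), fun i j hij => ?_⟩
      cases j using Fin.cases with
      | zero => exact absurd hij (Fin.not_lt_zero i)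
      | succ j =>
        cases i using Fin.cases with
        | zero => exact hc₀' j
        | succ i => exact hr i j (Fin.succ_lt_succ_iff.1 hij)
    rw [← Finset.card_sdiff_add_card_eq_card hM₁, mul_add_one, add_comm]
    exact add_le_add hcard hrest

theorem exists_isLeast_of_isChain {α : Type*} [Preorder α] {s : Finset α} (hne : s.Nonempty)
    (hs : IsChain (· ≤ ·) (s : Set α)) : ∃ a, IsLeast (s : Set α) a := by
  obtain ⟨a, ha⟩ := s.exists_minimal hne
  exact ⟨a, ha.prop, fun b hb => (hs.total ha.prop hb).elim id (ha.le_of_le hb)⟩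

theorem exists_isGreatest_of_isChain {α : Type*} [Preorder α] {s : Finset α}
    (hne : s.Nonempty) (hs : IsChain (· ≤ ·) (s : Set α)) : ∃ a, IsGreatest (s : Set α) a :=
  exists_isLeast_of_isChain (α := αᵒᵈ) hne hs.symm

theorem LFree.dual {α : Type*} [LE α] {m : ℕ} (h : LFree (α := α) (· ≤ ·) m) :
    LFree (α := αᵒᵈ) (· ≤ ·) m := by
  rintro ⟨x, y, hx, hy, hxy, hinc⟩
  exact h ⟨y ∘ Fin.rev, x ∘ Fin.rev,
    fun i j hij => (hy _ _ (Fin.rev_lt_rev.2 hij)).imp_right Ne.symm,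
    fun i j hij => (hx _ _ (Fin.rev_lt_rev.2 hij)).imp_right Ne.symm,
    fun i => (hxy _).imp_right Ne.symm, fun i j hij => hinc _ _ (Fin.rev_lt_rev.2 hij)⟩

section Grundy

variable {α κ : Type*} [PartialOrder α] {g : α → κ} {Q Y A : Finset α} {M : Finset κ}
  {p r s : κ → α} {c : κ} {w h k N : ℕ}

/-- `Y` is a convex subset of the finite subposet `Q`. -/
structure IsConvexIn (Q Y : Finset α) : Prop where
  subset : Y ⊆ Q
  mem_of_le_of_le : ∀ ⦃x⦄, x ∈ Y → ∀ ⦃y⦄, y ∈ Y → ∀ ⦃t⦄, t ∈ Q → x ≤ t → t ≤ y → t ∈ Y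

/-- `p < r` are consecutive elements of the color class `c` of `Q`. -/
structure IsGap (g : α → κ) (Q : Finset α) (c : κ) (p r : α) : Prop where
  left_mem : p ∈ Q
  right_mem : r ∈ Q
  left_color : g p = c
  right_color : g r = c
  lt : p < r
  le_or_le : ∀ t ∈ Q, g t = c → t ≤ p ∨ r ≤ t

theorem IsGap.dual {p r : α} (h : IsGap g Q c p r) : IsGap (α := αᵒᵈ) g Q c r p :=
  ⟨h.right_mem, h.left_mem, h.right_color, h.left_color, h.lt,
    fun t ht htc => (h.le_or_le t ht htc).symm⟩

/-- `p` lies below and `r` above the antichain `A`, and no element of `A` lies between them. -/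
structure Straddles (A : Finset α) (p r : α) : Prop where
  exists_ge : ∃ a ∈ A, p ≤ a
  exists_le : ∃ a ∈ A, a ≤ r
  not_le : ∀ a ∈ A, p ≤ a → ¬ a ≤ r

theorem Straddles.dual {p r : α} (h : Straddles A p r) : Straddles (α := αᵒᵈ) A r p :=
  ⟨h.exists_le, h.exists_ge, fun a ha har hpa => h.not_le a ha hpa har⟩

theorem Straddles.not_ge {p r b : α} (h : Straddles A p r) (hA : IsAntichain (· ≤ ·) (A : Set α))
    (hpr : p < r) (hb : b ∈ A) : ¬ b ≤ p := by
  intro hbp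
  obtain ⟨a, ha, hpa⟩ := h.exists_ge
  exact h.not_le b hb (hA.eq hb ha (hbp.trans hpa) ▸ hpa) (hbp.trans hpr.le)

open Classical in
theorem isConvexIn_filter_incompRel (Q B : Finset α) :
    IsConvexIn Q {y ∈ Q | ∀ b ∈ B, IncompRel (· ≤ ·) y b} where
  subset := Finset.filter_subset _ _
  mem_of_le_of_le _ hx _ hy _ ht hxt hty := Finset.mem_filter.2 ⟨ht, fun b hb =>
    ⟨fun htb => ((Finset.mem_filter.1 hx).2 b hb).not_le (hxt.trans htb),
      fun hbt => ((Finset.mem_filter.1 hy).2 b hb).not_ge (hbt.trans hty)⟩⟩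

variable [LinearOrder κ]

/-- The finite subposet `Q` is Grundy-colored by `g`: color classes are chains, and each element
has an incomparable witness in every smaller color that occurs in `Q`. The colors need not form an
initial segment, so that the notion is inherited by unions of color classes. -/
structure GrundyOn (g : α → κ) (Q : Finset α) : Prop where
  total : ∀ ⦃x⦄, x ∈ Q → ∀ ⦃y⦄, y ∈ Q → g x = g y → x ≤ y ∨ y ≤ x
  exists_witness : ∀ ⦃x⦄, x ∈ Q → ∀ ⦃y⦄, y ∈ Q → g x < g y →
    ∃ u ∈ Q, g u = g x ∧ IncompRel (· ≤ ·) u y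

theorem GrundyOn.dual (hg : GrundyOn g Q) : GrundyOn (α := αᵒᵈ) g Q where
  total _ hx _ hy hxy := (hg.total hx hy hxy).symm
  exists_witness _ hx _ hy hxy := by
    obtain ⟨u, hu, hux, huy⟩ := hg.exists_witness hx hy hxy
    exact ⟨u, hu, hux, huy.2, huy.1⟩

theorem GrundyOn.restrict {Q' : Finset α} (hg : GrundyOn g Q) (hQ' : Q' ⊆ Q)
    (hwitness : ∀ x ∈ Q', ∀ y ∈ Q', g x < g y →
      ∀ u ∈ Q, g u = g x → IncompRel (· ≤ ·) u y → u ∈ Q') : GrundyOn g Q' where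
  total _ hx _ hy hxy := hg.total (hQ' hx) (hQ' hy) hxy
  exists_witness x hx y hy hxy := by
    obtain ⟨u, hu, hux, huy⟩ := hg.exists_witness (hQ' hx) (hQ' hy) hxy
    exact ⟨u, hwitness x hx y hy hxy u hu hux huy, hux, huy⟩

theorem GrundyOn.isChain (hg : GrundyOn g Q) {s : Set α}
    (hs : ∀ x ∈ s, x ∈ Q ∧ g x = c) : IsChain (· ≤ ·) s :=
  fun _ hx _ hy _ => hg.total (hs _ hx).1 (hs _ hy).1 ((hs _ hx).2.trans (hs _ hy).2.symm)

theorem GrundyOn.exists_isGap (hg : GrundyOn g Q) {L : α → Prop}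
    (hL : ∃ t ∈ Q, g t = c ∧ L t) (hU : ∃ t ∈ Q, g t = c ∧ ¬ L t)
    (hLlower : ∀ t t', L t' → t ≤ t' → L t) : ∃ p r, IsGap g Q c p r ∧ L p ∧ ¬ L r := by
  classical
  obtain ⟨p, hp, hpmax⟩ := exists_isGreatest_of_isChain (s := {t ∈ Q | g t = c ∧ L t})
    (by simpa [Finset.Nonempty] using hL) (hg.isChain (c := c) (by simp +contextual))
  obtain ⟨r, hr, hrmin⟩ := exists_isLeast_of_isChain (s := {t ∈ Q | g t = c ∧ ¬ L t})
    (by simpa [Finset.Nonempty] using hU) (hg.isChain (c := c) (by simp +contextual))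
  obtain ⟨hpQ, hpc, hpL⟩ := Finset.mem_filter.1 hp
  obtain ⟨hrQ, hrc, hrL⟩ := Finset.mem_filter.1 hr
  have hrp : ¬ r ≤ p := fun hle => hrL (hLlower r p hpL hle)
  have hpr : p < r :=
    lt_of_le_not_ge ((hg.total hpQ hrQ (hpc.trans hrc.symm)).resolve_right hrp) hrp
  refine ⟨p, r, ⟨hpQ, hrQ, hpc, hrc, hpr, fun t ht htc => ?_⟩, hpL, hrL⟩
  by_cases htL : L t
  · exact .inl (hpmax (Finset.mem_filter.2 ⟨ht, htc, htL⟩))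
  · exact .inr (hrmin (Finset.mem_filter.2 ⟨ht, htc, htL⟩))

theorem GrundyOn.not_le_right_of_left_le {p r y : α} (hg : GrundyOn g Q) (hgap : IsGap g Q c p r)
    (hy : y ∈ Q) (hcy : c < g y) (hpy : p ≤ y) : ¬ y ≤ r := by
  intro hyr
  obtain ⟨u, hu, huc, huy⟩ := hg.exists_witness hgap.left_mem hy (hgap.left_color ▸ hcy)
  rcases hgap.le_or_le u hu (huc.trans hgap.left_color) with hup | hru
  · exact huy.not_le (hup.trans hpy)
  · exact huy.not_ge (hyr.trans hru)

-- Gaps whose colors and lower ends increase together are the rungs of a ladder.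
theorem GrundyOn.isLadderIn_of_isGap {n : ℕ} {c : Fin n → κ} {x y : Fin n → α}
    (hg : GrundyOn g Q) (hgap : ∀ i, IsGap g Q (c i) (x i) (y i)) (hsep : ∀ i j, ¬ y i ≤ x j)
    (hy : IsChain (· ≤ ·) (Set.range y)) (hcx : ∀ i j, i < j → c i < c j ∧ x i < x j) :
    IsLadderIn (· ≤ ·) x y := by
  have hxy (i j) (hij : i < j) : ¬ x j ≤ y i :=
    hg.not_le_right_of_left_le (hgap i) (hgap j).left_mem
      ((hcx i j hij).1.trans_eq (hgap j).left_color.symm) (hcx i j hij).2.le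
  have hyy (i j) (hij : i < j) : ¬ y j ≤ y i :=
    fun hle => hxy i j hij ((hgap j).lt.le.trans hle)
  exact ⟨fun i j hij => ⟨(hcx i j hij).2.le, (hcx i j hij).2.ne⟩,
    fun i j hij => ⟨(hy.total ⟨i, rfl⟩ ⟨j, rfl⟩).resolve_right (hyy i j hij),
      fun heq => hyy i j hij heq.ge⟩,
    fun i => ⟨(hgap i).lt.le, (hgap i).lt.ne⟩, fun i j hij => ⟨hsep i j, hxy i j hij⟩⟩

theorem GrundyOn.card_le_mul_of_antitoneOn (hg : GrundyOn g Q)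
    (hfree : LFree (α := α) (· ≤ ·) (k + 1)) (hgap : ∀ c ∈ M, IsGap g Q c (p c) (r c))
    (hsep : ∀ c ∈ M, ∀ d ∈ M, ¬ r c ≤ p d) (hp : IsChain (· ≤ ·) (p '' M))
    (hr : IsChain (· ≤ ·) (r '' M)) (hN : ∀ M' ⊆ M, AntitoneOn p M' → M'.card ≤ N) :
    M.card ≤ N * k := by
  have : IsTrans κ fun i j => i < j ∧ p i < p j :=
    ⟨fun _ _ _ h₁ h₂ => ⟨h₁.1.trans h₂.1, h₁.2.trans h₂.2⟩⟩
  refine card_le_mul_of_forall_not_rel (r := fun i j => i < j ∧ p i < p j) ?_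
    fun M' hM' hnot => hN M' hM' ?_
  · rintro ⟨c, hc, hcp⟩
    exact hfree ⟨p ∘ c, r ∘ c, hg.isLadderIn_of_isGap (fun i => hgap _ (hc i))
      (fun i j => hsep _ (hc i) _ (hc j))
      (hr.mono (Set.range_subset_iff.2 fun i => Set.mem_image_of_mem r (hc i))) hcp⟩
  · intro i hi j hj hij
    by_contra hji
    have hpij : p i ≤ p j := (hp.total (Set.mem_image_of_mem p (hM' hi))
      (Set.mem_image_of_mem p (hM' hj))).resolve_right hji
    exact hnot i hi j hj ⟨lt_of_le_of_ne hij fun h => hji (h ▸ le_rfl), lt_of_le_not_ge hpij hji⟩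

theorem GrundyOn.card_le_mul_of_monotoneOn (hg : GrundyOn g Q)
    (hfree : LFree (α := α) (· ≤ ·) (k + 1)) (hgap : ∀ c ∈ M, IsGap g Q c (p c) (r c))
    (hsep : ∀ c ∈ M, ∀ d ∈ M, ¬ r c ≤ p d) (hp : IsChain (· ≤ ·) (p '' M))
    (hr : IsChain (· ≤ ·) (r '' M)) (hN : ∀ M' ⊆ M, MonotoneOn r M' → M'.card ≤ N) :
    M.card ≤ N * k :=
  GrundyOn.card_le_mul_of_antitoneOn (α := αᵒᵈ) (p := r) (r := p) hg.dual hfree.dual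
    (fun c hc => (hgap c hc).dual)
    (fun c hc d hd => hsep d hd c hc) hr.symm hp.symm hN

open Classical in
-- A witness above the top or below the bottom of its color inside `Y` would be comparable to the
-- element it witnesses for.
theorem IsConvexIn.grundyOn (hY : IsConvexIn Q Y) (hg : GrundyOn g Q)
    (hs : ∀ c ∈ M, IsLeast {t | t ∈ Y ∧ g t = c} (s c))
    (hp : ∀ c ∈ M, IsGreatest {t | t ∈ Y ∧ g t = c} (p c))
    (hsmono : MonotoneOn s M) (hpanti : AntitoneOn p M) : GrundyOn g {y ∈ Y | g y ∈ M} := by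
  refine hg.restrict ((Finset.filter_subset _ _).trans hY.subset) ?_
  intro x hx y hy hxy u hu hux huy
  obtain ⟨-, hxM⟩ := Finset.mem_filter.1 hx
  obtain ⟨hyY, hyM⟩ := Finset.mem_filter.1 hy
  have hsu : s (g x) ≤ u :=
    (hg.total hu (hY.subset (hs _ hxM).1.1) (hux.trans (hs _ hxM).1.2.symm)).resolve_left
      fun hle => huy.not_le <|
        hle.trans ((hsmono hxM hyM hxy.le).trans ((hs _ hyM).2 ⟨hyY, rfl⟩))
  have hup : u ≤ p (g x) :=
    (hg.total hu (hY.subset (hp _ hxM).1.1) (hux.trans (hp _ hxM).1.2.symm)).resolve_right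
      fun hle => huy.not_ge <|
        ((hp _ hyM).2 ⟨hyY, rfl⟩).trans ((hpanti hxM hyM hxy.le).trans hle)
  exact Finset.mem_filter.2
    ⟨hY.mem_of_le_of_le (hs _ hxM).1.1 (hp _ hxM).1.1 hu hsu hup, hux ▸ hxM⟩

theorem GrundyOn.monotoneOn_of_isLeast (hg : GrundyOn g Q)
    (hs : ∀ c ∈ M, IsLeast {t | t ∈ Q ∧ g t = c} (s c)) (hchain : IsChain (· ≤ ·) (s '' M)) :
    MonotoneOn s M := by
  intro i hi j hj hij
  obtain rfl | hlt := hij.eq_or_lt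
  · exact le_rfl
  obtain ⟨u, hu, hui, hinc⟩ := hg.exists_witness (hs i hi).1.1 (hs j hj).1.1
    (by rwa [(hs i hi).1.2, (hs j hj).1.2])
  have hsu : s i ≤ u := (hs i hi).2 ⟨hu, hui.trans (hs i hi).1.2⟩
  exact (hchain.total (Set.mem_image_of_mem s hi) (Set.mem_image_of_mem s hj)).resolve_right
    fun hle => hinc.not_ge (hle.trans hsu)

open Classical in
-- If the least element `s c` of color `c` in `Y` is not least in `Q`, it is the upper end of a gap.
theorem IsConvexIn.card_le_of_monotoneOn (hY : IsConvexIn Q Y) (hg : GrundyOn g Q)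
    (hQ : HasWidthLE Q w) (hfree : LFree (α := α) (· ≤ ·) (k + 1))
    (hs : ∀ c ∈ M, IsLeast {t | t ∈ Y ∧ g t = c} (s c)) (hchain : IsChain (· ≤ ·) (s '' M))
    (hN : ∀ M' ⊆ M, MonotoneOn s M' → M'.card ≤ N) : M.card ≤ N + N * k * w := by
  rw [← Finset.card_filter_add_card_filter_not fun c => ∀ t ∈ Q, g t = c → s c ≤ t]
  refine add_le_add (hN _ (Finset.filter_subset _ _) (hg.monotoneOn_of_isLeast ?_ ?_)) ?_
  · intro c hc
    obtain ⟨hcM, hmin⟩ := Finset.mem_filter.1 hc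
    exact ⟨⟨hY.subset (hs c hcM).1.1, (hs c hcM).1.2⟩, fun t ht => hmin t ht.1 ht.2⟩
  · exact hchain.mono (Set.image_mono (Finset.coe_subset.2 (Finset.filter_subset _ _)))
  set M₁ := {c ∈ M | ¬ ∀ t ∈ Q, g t = c → s c ≤ t}
  have hM₁ : M₁ ⊆ M := Finset.filter_subset _ _
  have hgap (c) (hc : c ∈ M₁) : ∃ z, IsGap g Q c z (s c) := by
    obtain ⟨hcM, hnot⟩ := Finset.mem_filter.1 hc
    push Not at hnot
    obtain ⟨z, r, hgap, hz, hr⟩ := hg.exists_isGap (L := fun t => ¬ s c ≤ t) hnot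
      ⟨s c, hY.subset (hs c hcM).1.1, (hs c hcM).1.2, not_not_intro le_rfl⟩
      fun t t' ht' htt' ht => ht' (ht.trans htt')
    have hrs : r ≤ s c :=
      (hgap.le_or_le _ (hY.subset (hs c hcM).1.1) (hs c hcM).1.2).resolve_left hz
    exact ⟨z, hrs.antisymm (not_not.1 hr) ▸ hgap⟩
  rcases M₁.eq_empty_or_nonempty with hempty | ⟨c₀, -⟩
  · simp [hempty]
  have : Nonempty α := ⟨s c₀⟩
  choose! z hz using hgap
  refine hQ.card_le_mul_of_isChain (fun c hc => (hz c hc).left_mem) fun M' hM' hzchain => ?_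
  have hM'M : M' ⊆ M := hM'.trans hM₁
  refine hg.card_le_mul_of_monotoneOn hfree (fun c hc => hz c (hM' hc)) ?_ hzchain
    (hchain.mono (Set.image_mono hM'M)) fun M'' hM'' => hN M'' (hM''.trans hM'M)
  intro c hc d hd hle
  have hzY : z d ∈ Y := hY.mem_of_le_of_le (hs c (hM'M hc)).1.1 (hs d (hM'M hd)).1.1
    (hz d (hM' hd)).left_mem hle (hz d (hM' hd)).lt.le
  exact (hz d (hM' hd)).lt.not_ge ((hs d (hM'M hd)).2 ⟨hzY, (hz d (hM' hd)).left_color⟩)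

open Classical in
theorem IsConvexIn.card_le_of_isGap (hY : IsConvexIn Q Y) (hYh : HasWidthLE Y h)
    (hg : GrundyOn g Q) (hQ : HasWidthLE Q w) (hfree : LFree (α := α) (· ≤ ·) (k + 1))
    (hgap : ∀ c ∈ M, IsGap g Q c (p c) (r c)) (hpY : ∀ c ∈ M, p c ∈ Y)
    (hrY : ∀ c ∈ M, ∀ y ∈ Y, ¬ r c ≤ y) (hp : IsChain (· ≤ ·) (p '' M))
    (hr : IsChain (· ≤ ·) (r '' M))
    (hN : ∀ Q' : Finset α, GrundyOn g Q' → HasWidthLE Q' h → (Q'.image g).card ≤ N) :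
    M.card ≤ (N + N * k * w) * k * h := by
  have hpmax (c) (hc : c ∈ M) : IsGreatest {t | t ∈ Y ∧ g t = c} (p c) :=
    ⟨⟨hpY c hc, (hgap c hc).left_color⟩, fun t ⟨htY, htc⟩ =>
      ((hgap c hc).le_or_le t (hY.subset htY) htc).resolve_right (hrY c hc t htY)⟩
  have hmin (c) (hc : c ∈ M) : ∃ s, IsLeast {t | t ∈ Y ∧ g t = c} s := by
    simpa using exists_isLeast_of_isChain (s := {t ∈ Y | g t = c})
      ⟨p c, Finset.mem_filter.2 (hpmax c hc).1⟩
      (hg.isChain (c := c) (by simp +contextual [hY.subset _]))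
  rcases M.eq_empty_or_nonempty with rfl | ⟨c₀, -⟩
  · simp
  have : Nonempty α := ⟨p c₀⟩
  choose! s hs using hmin
  refine hYh.card_le_mul_of_isChain (fun c hc => (hs c hc).1.1) fun M₁ hM₁ hchain => ?_
  refine hg.card_le_mul_of_antitoneOn hfree (fun c hc => hgap c (hM₁ hc))
    (fun c hc d hd => hrY c (hM₁ hc) _ (hpY d (hM₁ hd)))
    (hp.mono (Set.image_mono hM₁)) (hr.mono (Set.image_mono hM₁)) fun M₂ hM₂ hanti => ?_
  refine hY.card_le_of_monotoneOn hg hQ hfree (fun c hc => hs c (hM₁ (hM₂ hc)))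
    (hchain.mono (Set.image_mono hM₂)) fun M₃ hM₃ hmono => ?_
  have hM₃M : M₃ ⊆ M := hM₃.trans (hM₂.trans hM₁)
  have hQ' : GrundyOn g {y ∈ Y | g y ∈ M₃} := hY.grundyOn hg (fun c hc => hs c (hM₃M hc))
    (fun c hc => hpmax c (hM₃M hc)) hmono (hanti.mono hM₃)
  refine le_trans (Finset.card_le_card fun c hc => ?_)
    (hN _ hQ' (hYh.mono (Finset.filter_subset _ _)))
  have hpc : g (p c) = c := (hpmax c (hM₃M hc)).1.2
  exact Finset.mem_image.2 ⟨p c, Finset.mem_filter.2 ⟨hpY c (hM₃M hc), by rwa [hpc]⟩, hpc⟩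

open Classical in
theorem GrundyOn.card_le_of_straddles_of_card_filter_le (hg : GrundyOn g Q)
    (hQ : HasWidthLE Q A.card) (hfree : LFree (α := α) (· ≤ ·) (k + 1)) (hAQ : A ⊆ Q)
    (hA : IsAntichain (· ≤ ·) (A : Set α)) (hgap : ∀ c ∈ M, IsGap g Q c (p c) (r c))
    (hstr : ∀ c ∈ M, Straddles A (p c) (r c)) (hp : IsChain (· ≤ ·) (p '' M))
    (hr : IsChain (· ≤ ·) (r '' M)) (hh : ∀ c ∈ M, {a ∈ A | p c ≤ a}.card ≤ h)
    (hN : ∀ Q' : Finset α, GrundyOn g Q' → HasWidthLE Q' h → (Q'.image g).card ≤ N) :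
    M.card ≤ (N + N * k * A.card) * k * h := by
  rcases M.eq_empty_or_nonempty with rfl | hM
  · simp
  obtain ⟨_, hp₁, hpmin⟩ := exists_isLeast_of_isChain (hM.image p) (by rwa [Finset.coe_image])
  obtain ⟨_, hr₂, hrmin⟩ := exists_isLeast_of_isChain (hM.image r) (by rwa [Finset.coe_image])
  obtain ⟨c₁, hc₁, rfl⟩ := Finset.mem_image.1 hp₁
  obtain ⟨c₂, hc₂, rfl⟩ := Finset.mem_image.1 hr₂
  replace hpmin (c) (hc : c ∈ M) : p c₁ ≤ p c := hpmin (Finset.mem_image_of_mem p hc)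
  replace hrmin (c) (hc : c ∈ M) : r c₂ ≤ r c := hrmin (Finset.mem_image_of_mem r hc)
  let B : Finset α := {a ∈ A | ¬ p c₁ ≤ a}
  have hBA : B ⊆ A := Finset.filter_subset _ _
  obtain ⟨z, hzA, hzr⟩ := (hstr c₂ hc₂).exists_le
  have hzB : z ∈ B := Finset.mem_filter.2
    ⟨hzA, fun hle => (hstr c₁ hc₁).not_le z hzA hle (hzr.trans (hrmin c₁ hc₁))⟩
  have hcard : A.card ≤ h + B.card := by
    rw [← Finset.card_filter_add_card_filter_not fun a => p c₁ ≤ a]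
    exact Nat.add_le_add_right (hh c₁ hc₁) _
  refine (isConvexIn_filter_incompRel Q B).card_le_of_isGap
    (HasWidthLE.filter_incompRel (fun S hS hanti => (hQ hS hanti).trans hcard) (hBA.trans hAQ)
      (hA.subset hBA)) hg hQ hfree hgap (fun c hc => ?_) (fun c hc y hy hle => ?_) hp hr hN
  · refine Finset.mem_filter.2 ⟨(hgap c hc).left_mem, fun b hb => ⟨fun hle => ?_, ?_⟩⟩
    · exact (Finset.mem_filter.1 hb).2 ((hpmin c hc).trans hle)
    · exact (hstr c hc).not_ge hA (hgap c hc).lt (hBA hb)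
  · exact ((Finset.mem_filter.1 hy).2 z hzB).not_ge (hzr.trans ((hrmin c hc).trans hle))

open Classical in
-- The elements of `A` above `p c` and those below `r c` are disjoint, so one of the two sets has at
-- most half the elements of `A`.
theorem GrundyOn.card_le_of_straddles_of_isChain (hg : GrundyOn g Q) (hQ : HasWidthLE Q A.card)
    (hfree : LFree (α := α) (· ≤ ·) (k + 1)) (hAQ : A ⊆ Q) (hA : IsAntichain (· ≤ ·) (A : Set α))
    (hgap : ∀ c ∈ M, IsGap g Q c (p c) (r c)) (hstr : ∀ c ∈ M, Straddles A (p c) (r c))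
    (hp : IsChain (· ≤ ·) (p '' M)) (hr : IsChain (· ≤ ·) (r '' M))
    (hN : ∀ Q' : Finset α, GrundyOn g Q' → HasWidthLE Q' (A.card / 2) → (Q'.image g).card ≤ N) :
    M.card ≤ 2 * ((N + N * k * A.card) * k * (A.card / 2)) := by
  rw [← Finset.card_filter_add_card_filter_not
    fun c => {a ∈ A | p c ≤ a}.card ≤ A.card / 2, two_mul]
  set M₁ := {c ∈ M | {a ∈ A | p c ≤ a}.card ≤ A.card / 2}
  set M₂ := {c ∈ M | ¬ {a ∈ A | p c ≤ a}.card ≤ A.card / 2}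
  have hM₁ : M₁ ⊆ M := Finset.filter_subset _ _
  have hM₂ : M₂ ⊆ M := Finset.filter_subset _ _
  have hdown (c) (hc : c ∈ M₂) : {a ∈ A | a ≤ r c}.card ≤ A.card / 2 := by
    have hdisj : {a ∈ A | p c ≤ a}.card + {a ∈ A | a ≤ r c}.card ≤ A.card := by
      rw [← Finset.card_filter_add_card_filter_not (s := A) fun a => p c ≤ a]
      gcongr with a ha
      exact fun har hpa => (hstr c (hM₂ hc)).not_le a ha hpa har
    have hup := (Finset.mem_filter.1 hc).2
    omega
  refine add_le_add ?_ ?_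
  · exact hg.card_le_of_straddles_of_card_filter_le hQ hfree hAQ hA
      (fun c hc => hgap c (hM₁ hc)) (fun c hc => hstr c (hM₁ hc))
      (hp.mono (Set.image_mono hM₁)) (hr.mono (Set.image_mono hM₁))
      (fun c hc => (Finset.mem_filter.1 hc).2) hN
  · exact GrundyOn.card_le_of_straddles_of_card_filter_le (α := αᵒᵈ) hg.dual hQ.dual hfree.dual
      hAQ hA.swap (fun c hc => (hgap c (hM₂ hc)).dual) (fun c hc => (hstr c (hM₂ hc)).dual)
      (hr.mono (Set.image_mono hM₂)).symm (hp.mono (Set.image_mono hM₂)).symm hdown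
      fun Q' hg' hw' => hN Q' hg'.dual hw'.dual

theorem GrundyOn.card_le_of_straddles (hg : GrundyOn g Q) (hQ : HasWidthLE Q A.card)
    (hfree : LFree (α := α) (· ≤ ·) (k + 1)) (hAQ : A ⊆ Q) (hA : IsAntichain (· ≤ ·) (A : Set α))
    (hgap : ∀ c ∈ M, IsGap g Q c (p c) (r c)) (hstr : ∀ c ∈ M, Straddles A (p c) (r c))
    (hN : ∀ Q' : Finset α, GrundyOn g Q' → HasWidthLE Q' (A.card / 2) → (Q'.image g).card ≤ N) :
    M.card ≤ A.card ^ 4 * (k + 1) ^ 2 * N := by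
  have hcard : M.card ≤ 2 * ((N + N * k * A.card) * k * (A.card / 2)) * A.card * A.card := by
    refine hQ.card_le_mul_of_isChain (fun c hc => (hgap c hc).left_mem) fun M₁ hM₁ hp => ?_
    refine hQ.card_le_mul_of_isChain (fun c hc => (hgap c (hM₁ hc)).right_mem) fun M₂ hM₂ hr => ?_
    exact hg.card_le_of_straddles_of_isChain hQ hfree hAQ hA (fun c hc => hgap c (hM₁ (hM₂ hc)))
      (fun c hc => hstr c (hM₁ (hM₂ hc))) (hp.mono (Set.image_mono hM₂)) hr hN
  have hfactor : (1 + k * A.card) * k * A.card ≤ A.card * (k + 1) ^ 2 * A.card := by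
    rcases A.card.eq_zero_or_pos with h0 | hpos
    · simp [h0]
    · exact Nat.mul_le_mul_right _ (by nlinarith)
  calc M.card ≤ 2 * ((N + N * k * A.card) * k * (A.card / 2)) * A.card * A.card := hcard
    _ = N * ((1 + k * A.card) * k * A.card) * (2 * (A.card / 2)) * A.card := by ring
    _ ≤ N * (A.card * (k + 1) ^ 2 * A.card) * A.card * A.card := by
      gcongr
      exact Nat.mul_div_le _ _
    _ = A.card ^ 4 * (k + 1) ^ 2 * N := by ring

theorem GrundyOn.exists_straddles (hg : GrundyOn g Q) (hQ : HasWidthLE Q A.card) (hAQ : A ⊆ Q)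
    (hA : IsAntichain (· ≤ ·) (A : Set α)) (hc : c ∈ Q.image g) (hcA : ∀ a ∈ A, c < g a) :
    ∃ p r, IsGap g Q c p r ∧ Straddles A p r := by
  classical
  have hcomp (t) (ht : t ∈ Q) : ∃ a ∈ A, t ≤ a ∨ a ≤ t := hQ.exists_le_or_le hAQ hA ht
  obtain ⟨x, hx, hxc⟩ := Finset.mem_image.1 hc
  have hwitness (a) (ha : a ∈ A) : ∃ u ∈ {t ∈ Q | g t = c}, IncompRel (· ≤ ·) u a := by
    obtain ⟨u, hu, hux, hua⟩ := hg.exists_witness hx (hAQ ha) (hxc ▸ hcA a ha)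
    exact ⟨u, Finset.mem_filter.2 ⟨hu, hux.trans hxc⟩, hua⟩
  have hne : {t ∈ Q | g t = c}.Nonempty := ⟨x, Finset.mem_filter.2 ⟨hx, hxc⟩⟩
  have hchain : IsChain (· ≤ ·) ({t ∈ Q | g t = c} : Set α) :=
    hg.isChain (c := c) fun t ht => ht
  obtain ⟨e, he, hemin⟩ := exists_isLeast_of_isChain hne (by simpa using hchain)
  obtain ⟨f, hf, hfmax⟩ := exists_isGreatest_of_isChain hne (by simpa using hchain)
  have heA : ∃ a ∈ A, e ≤ a := by
    obtain ⟨a, ha, hea | hae⟩ := hcomp e (Finset.mem_filter.1 he).1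
    · exact ⟨a, ha, hea⟩
    · obtain ⟨u, hu, hua⟩ := hwitness a ha
      exact absurd (hae.trans (hemin hu)) hua.not_ge
  have hfA : ¬ ∃ a ∈ A, f ≤ a := by
    rintro ⟨a, ha, hfa⟩
    obtain ⟨u, hu, hua⟩ := hwitness a ha
    exact hua.not_le ((hfmax hu).trans hfa)
  obtain ⟨p, r, hgap, hp, hr⟩ := hg.exists_isGap (c := c) (L := fun t => ∃ a ∈ A, t ≤ a)
    (by simpa using ⟨e, by simpa [and_assoc] using And.intro (Finset.mem_filter.1 he) heA⟩)
    (by simpa using ⟨f, by simpa [and_assoc] using And.intro (Finset.mem_filter.1 hf) hfA⟩)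
    fun t t' ⟨a, ha, hle⟩ htt' => ⟨a, ha, htt'.trans hle⟩
  refine ⟨p, r, hgap, hp, ?_, fun a ha hpa => ?_⟩
  · obtain ⟨a, ha, hra | har⟩ := hcomp r hgap.right_mem
    · exact absurd ⟨a, ha, hra⟩ hr
    · exact ⟨a, ha, har⟩
  · exact hg.not_le_right_of_left_le hgap (hAQ ha) (hcA a ha) hpa

theorem GrundyOn.card_le_of_forall_lt (hg : GrundyOn g Q) (hQ : HasWidthLE Q A.card)
    (hfree : LFree (α := α) (· ≤ ·) (k + 1)) (hAQ : A ⊆ Q) (hA : IsAntichain (· ≤ ·) (A : Set α))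
    (hMQ : M ⊆ Q.image g) (hMA : ∀ c ∈ M, ∀ a ∈ A, c < g a)
    (hN : ∀ Q' : Finset α, GrundyOn g Q' → HasWidthLE Q' (A.card / 2) → (Q'.image g).card ≤ N) :
    M.card ≤ A.card ^ 4 * (k + 1) ^ 2 * N := by
  rcases M.eq_empty_or_nonempty with rfl | ⟨c₀, hc₀⟩
  · simp
  obtain ⟨x₀, -, -⟩ := Finset.mem_image.1 (hMQ hc₀)
  have : Nonempty α := ⟨x₀⟩
  choose! p r hgap hstr using fun c hc => hg.exists_straddles hQ hAQ hA (hMQ hc) (hMA c hc)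
  exact hg.card_le_of_straddles hQ hfree hAQ hA hgap hstr hN

theorem HasWidthLE.exists_isAntichain_forall_le (hQ : HasWidthLE Q (w + 1))
    (hw : ¬ HasWidthLE Q w) (g : α → κ) :
    ∃ A ⊆ Q, IsAntichain (· ≤ ·) (A : Set α) ∧ A.card = w + 1 ∧
      ∃ c, (∀ a ∈ A, c ≤ g a) ∧ HasWidthLE {y ∈ Q | c < g y} w := by
  classical
  have hmin (Q' : Finset α) (hw : ¬ HasWidthLE Q' w) : ∃ y ∈ Q', ∀ x ∈ Q', g y ≤ g x := by
    refine Q'.exists_min_image g (Finset.nonempty_iff_ne_empty.2 ?_)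
    rintro rfl
    exact hw fun S hS _ => (Finset.card_le_card hS).trans (Nat.zero_le w)
  obtain ⟨y, hyQ, hymin⟩ := hmin Q hw
  obtain ⟨z, hz, hzmax⟩ := {z ∈ Q | ¬ HasWidthLE {x ∈ Q | g z ≤ g x} w}.exists_max_image g
    ⟨y, Finset.mem_filter.2 ⟨hyQ, by rwa [Finset.filter_true_of_mem hymin]⟩⟩
  obtain ⟨-, hzw⟩ := Finset.mem_filter.1 hz
  simp only [HasWidthLE, not_forall, not_le] at hzw
  obtain ⟨A, hA, hanti, hcard⟩ := hzw
  have hAQ : A ⊆ Q := hA.trans (Finset.filter_subset _ _)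
  refine ⟨A, hAQ, hanti, (hQ hAQ hanti).antisymm hcard, g z,
    fun a ha => (Finset.mem_filter.1 (hA ha)).2, ?_⟩
  by_contra hnot
  obtain ⟨v, hv, hvmin⟩ := hmin _ hnot
  obtain ⟨hvQ, hzv⟩ := Finset.mem_filter.1 hv
  refine hzv.not_ge (hzmax v (Finset.mem_filter.2 ⟨hvQ, fun hvw => hnot (hvw.mono fun x hx => ?_)⟩))
  exact Finset.mem_filter.2 ⟨(Finset.mem_filter.1 hx).1, hvmin x hx⟩

open Classical in
theorem card_image_le_card_filter_lt_add {β : Type*} (Q : Finset β) (g : β → κ) (c : κ) :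
    (Q.image g).card ≤
      {d ∈ Q.image g | d < c}.card + 1 + ({y ∈ Q | c < g y}.image g).card := by
  have hsplit : Q.image g ⊆ {d ∈ Q.image g | d < c} ∪ {c} ∪ {y ∈ Q | c < g y}.image g := by
    intro d hd
    rcases lt_trichotomy d c with h | h | h
    · simp [h, Finset.mem_image.1 hd]
    · simp [h]
    · obtain ⟨y, hy, rfl⟩ := Finset.mem_image.1 hd
      exact Finset.mem_union_right _ (Finset.mem_image_of_mem g (Finset.mem_filter.2 ⟨hy, h⟩))
  grw [hsplit, Finset.card_union_le, Finset.card_union_le, Finset.card_singleton]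

/-- Recursive upper bound on the number of colors of a Grundy-colored finite poset of width at most
`w` without `m`-ladder. -/
def grundyBound (m : ℕ) : ℕ → ℕ
  | 0 => 0
  | w + 1 => grundyBound m w + 1 + (w + 1) ^ 4 * m ^ 2 * grundyBound m ((w + 1) / 2)
decreasing_by all_goals omega

theorem GrundyOn.card_image_le_grundyBound (hg : GrundyOn g Q) (hQ : HasWidthLE Q w)
    (hfree : LFree (α := α) (· ≤ ·) (k + 1)) : (Q.image g).card ≤ grundyBound (k + 1) w := by
  classical
  induction w using Nat.strong_induction_on generalizing Q with
  | _ w ih =>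
  cases w with
  | zero =>
    rcases Q.eq_empty_or_nonempty with rfl | ⟨x, hx⟩
    · simp
    · simpa using hQ (Finset.singleton_subset_iff.2 hx) (by simp)
  | succ w =>
  rw [grundyBound]
  by_cases hw : HasWidthLE Q w
  · exact (ih w w.lt_succ_self hg hw).trans (by omega)
  obtain ⟨A, hAQ, hA, hAcard, c, hcA, hc⟩ := hQ.exists_isAntichain_forall_le hw g
  have habove : ({y ∈ Q | c < g y}.image g).card ≤ grundyBound (k + 1) w :=
    ih w w.lt_succ_self (hg.restrict (Finset.filter_subset _ _) fun x hx _ _ _ u hu hux _ =>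
      Finset.mem_filter.2 ⟨hu, hux ▸ (Finset.mem_filter.1 hx).2⟩) hc
  have hbelow : {d ∈ Q.image g | d < c}.card ≤
      (w + 1) ^ 4 * (k + 1) ^ 2 * grundyBound (k + 1) ((w + 1) / 2) := by
    rw [← hAcard] at hQ ⊢
    refine hg.card_le_of_forall_lt hQ hfree hAQ hA (Finset.filter_subset _ _)
      (fun d hd a ha => (Finset.mem_filter.1 hd).2.trans_le (hcA a ha)) fun Q' hg' hQ' => ?_
    exact ih _ (by omega) hg' hQ'
  have hsplit := card_image_le_card_filter_lt_add Q g c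
  omega

end Grundy

section Numerics

open Real

variable {m x : ℝ}

/-- The bound `x ^ (2.5 * lg (2 * x) + 2 * lg m)` of the theorem, for real width `x`. -/
noncomputable def firstFitBound (m x : ℝ) : ℝ :=
  x ^ (2.5 * logb 2 (2 * x) + 2 * logb 2 m)

theorem firstFitBound_one (m : ℝ) : firstFitBound m 1 = 1 := by
  simp [firstFitBound]

theorem firstFitBound_half_mul (hm : 0 < m) (hx : 0 < x) :
    firstFitBound m (x / 2) * (x ^ 5 * m ^ 2) = firstFitBound m x := by
  have hlog : log 2 ≠ 0 := (log_pos one_lt_two).ne'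
  have hpow (y e : ℝ) (hy : 0 < y) : y ^ e = exp (log y * e) := rpow_def_of_pos hy e
  simp only [firstFitBound, mul_div_cancel₀ x two_ne_zero, hpow _ _ hx, hpow _ _ (half_pos hx),
    ← rpow_natCast, hpow _ _ hm, ← exp_add, logb, log_mul two_ne_zero hx.ne',
    log_div hx.ne' two_ne_zero]
  congr 1
  field_simp
  push_cast
  ring

theorem firstFitBound_div_sq (m : ℝ) (hx : 0 < x) :
    firstFitBound m x / x ^ 2 = x ^ (2.5 * logb 2 (2 * x) + 2 * logb 2 m - 2) := by
  rw [firstFitBound, ← rpow_natCast, ← rpow_sub hx, Nat.cast_ofNat]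

theorem monotoneOn_firstFitBound_div_sq (hm : 1 ≤ m) :
    MonotoneOn (fun x => firstFitBound m x / x ^ 2) (Set.Ici 1) := by
  intro x (hx : 1 ≤ x) y (hy : 1 ≤ y) hxy
  have hlogm : 0 ≤ logb 2 m := logb_nonneg one_lt_two hm
  have hlogy : 1 ≤ logb 2 (2 * y) := by
    rw [le_logb_iff_rpow_le one_lt_two (by positivity), rpow_one]
    linarith
  simp only [firstFitBound_div_sq m (zero_lt_one.trans_le hx),
    firstFitBound_div_sq m (zero_lt_one.trans_le hy)]
  calc x ^ (2.5 * logb 2 (2 * x) + 2 * logb 2 m - 2)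
      ≤ x ^ (2.5 * logb 2 (2 * y) + 2 * logb 2 m - 2) := by
        gcongr
        exact one_lt_two
    _ ≤ y ^ (2.5 * logb 2 (2 * y) + 2 * logb 2 m - 2) := by
        gcongr
        linarith

theorem monotoneOn_firstFitBound (hm : 1 ≤ m) : MonotoneOn (firstFitBound m) (Set.Ici 1) := by
  intro x (hx : 1 ≤ x) y (hy : 1 ≤ y) hxy
  have hdiv := monotoneOn_firstFitBound_div_sq hm hx hy hxy
  rw [← div_mul_cancel₀ (firstFitBound m x) (pow_ne_zero 2 (by positivity : x ≠ 0)),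
    ← div_mul_cancel₀ (firstFitBound m y) (pow_ne_zero 2 (by positivity : y ≠ 0))]
  have : 0 ≤ firstFitBound m y / y ^ 2 := by
    rw [firstFitBound]
    positivity
  gcongr

-- With `b = firstFitBound m x / x ^ 2` the three summands are at most `b * (x - 1) ^ 2`, `b` and
-- `b * x`.
theorem firstFitBound_recursion_le (hm : 1 ≤ m) (hx : 2 ≤ x) :
    firstFitBound m (x - 1) + 1 + x ^ 4 * m ^ 2 * firstFitBound m (x / 2) ≤ firstFitBound m x := by
  have hx₀ : 0 < x := by linarith
  have hx₁ : x ∈ Set.Ici (1 : ℝ) := Set.mem_Ici.2 (by linarith)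
  set b := firstFitBound m x / x ^ 2 with hb
  have hbx : firstFitBound m x = b * x ^ 2 := by rw [hb]; field_simp
  have hfirst : firstFitBound m (x - 1) ≤ b * (x - 1) ^ 2 :=
    (div_le_iff₀ (pow_pos (by linarith) 2)).1 <| monotoneOn_firstFitBound_div_sq hm
      (Set.mem_Ici.2 (by linarith)) hx₁ (by linarith)
  have hone : 1 ≤ b := by
    simpa [firstFitBound_one] using
      monotoneOn_firstFitBound_div_sq hm (Set.mem_Ici.2 le_rfl) hx₁ (Set.mem_Ici.1 hx₁)
  have hhalf : x ^ 4 * m ^ 2 * firstFitBound m (x / 2) = b * x := by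
    rw [hb, ← firstFitBound_half_mul (zero_lt_one.trans_le hm) hx₀]
    field_simp
  rw [hbx, hhalf]
  nlinarith

theorem grundyBound_le_firstFitBound {m w : ℕ} (hm : 0 < m) (hw : 0 < w) :
    (grundyBound m w : ℝ) ≤ firstFitBound m w := by
  have hm₁ : (1 : ℝ) ≤ m := by exact_mod_cast hm
  induction w using Nat.strong_induction_on with
  | _ w ih =>
  obtain _ | _ | w := w
  · exact absurd hw (lt_irrefl 0)
  · simp [grundyBound, firstFitBound_one]
  have hhalf : (grundyBound m ((w + 2) / 2) : ℝ) ≤ firstFitBound m ((w + 2 : ℕ) / 2) :=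
    (ih _ (by omega) (by omega)).trans <| monotoneOn_firstFitBound hm₁
      (Set.mem_Ici.2 (by exact_mod_cast (by omega : 1 ≤ (w + 2) / 2)))
      (Set.mem_Ici.2 (by push_cast; linarith [w.cast_nonneg (α := ℝ)])) Nat.cast_div_le
  have hpred : (grundyBound m (w + 1) : ℝ) ≤ firstFitBound m ((w + 2 : ℕ) - 1) := by
    convert ih (w + 1) (by omega) w.succ_pos using 2
    push_cast
    ring
  calc (grundyBound m (w + 2) : ℝ)
      = grundyBound m (w + 1) + 1 + (w + 2 : ℕ) ^ 4 * m ^ 2 * grundyBound m ((w + 2) / 2) := by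
        rw [grundyBound]
        push_cast
        ring
    _ ≤ firstFitBound m ((w + 2 : ℕ) - 1) + 1 +
          (w + 2 : ℕ) ^ 4 * m ^ 2 * firstFitBound m ((w + 2 : ℕ) / 2) := by gcongr
    _ ≤ firstFitBound m (w + 2 : ℕ) := firstFitBound_recursion_le hm₁ (by norm_cast; omega)

end Numerics

-- Closing a vertex under witnesses only adds smaller colors, so finitely many vertices suffice.
theorem IsGrundy.exists_finset_closed {α : Type*} {le : α → α → Prop} {n : ℕ} {g : α → ℕ}
    (hg : IsGrundy le n g) (v : α) :
    ∃ Q : Finset α, v ∈ Q ∧ ∀ x ∈ Q, ∀ i, 1 ≤ i → i < g x →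
      ∃ u ∈ Q, (¬ le u x ∧ ¬ le x u) ∧ g u = i := by
  classical
  obtain ⟨-, -, -, hwitness⟩ := hg
  induction hv : g v using Nat.strong_induction_on generalizing v with
  | _ j ih =>
  subst hv
  have : Nonempty α := ⟨v⟩
  choose! u hinc hcolor using hwitness v
  choose! Q hmem hclosed using fun i (hi : i ∈ Finset.Ico 1 (g v)) =>
    ih i (Finset.mem_Ico.1 hi).2 (u i)
      (hcolor i (Finset.mem_Ico.1 hi).1 (Finset.mem_Ico.1 hi).2)
  have hQ (i) (hi : i ∈ Finset.Ico 1 (g v)) : Q i ⊆ insert v ((Finset.Ico 1 (g v)).biUnion Q) :=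
    (Finset.subset_biUnion_of_mem Q hi).trans (Finset.subset_insert _ _)
  refine ⟨insert v ((Finset.Ico 1 (g v)).biUnion Q), Finset.mem_insert_self _ _, ?_⟩
  intro x hx i hi hix
  rcases Finset.mem_insert.1 hx with rfl | hx
  · have hiv := Finset.mem_Ico.2 ⟨hi, hix⟩
    exact ⟨u i, hQ i hiv (hmem i hiv), hinc i hi hix, hcolor i hi hix⟩
  · obtain ⟨j, hj, hxj⟩ := Finset.mem_biUnion.1 hx
    obtain ⟨y, hy, hyx⟩ := hclosed j hj x hxj i hi hix
    exact ⟨y, hQ j hj hy, hyx⟩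

theorem IsGrundy.exists_grundyOn {α : Type*} [PartialOrder α] {n : ℕ} {g : α → ℕ}
    (hg : IsGrundy (α := α) (· ≤ ·) n g) :
    ∃ Q : Finset α, GrundyOn g Q ∧ n ≤ (Q.image g).card := by
  rcases n.eq_zero_or_pos with rfl | hn
  · exact ⟨∅, ⟨by simp, by simp⟩, Nat.zero_le _⟩
  obtain ⟨v, hv⟩ := hg.2.1 n hn le_rfl
  obtain ⟨Q, hvQ, hQ⟩ := hg.exists_finset_closed v
  refine ⟨Q, ⟨fun x _ y _ => hg.2.2.1 x y, fun x _ y hy hxy => ?_⟩, ?_⟩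
  · obtain ⟨u, hu, hinc, hux⟩ := hQ y hy (g x) (hg.1 x).1 hxy
    exact ⟨u, hu, hux, hinc⟩
  · have hcolors : Finset.Icc 1 n ⊆ Q.image g := fun i hi => by
      obtain ⟨hi, hin⟩ := Finset.mem_Icc.1 hi
      rcases hin.eq_or_lt with rfl | hlt
      · exact Finset.mem_image.2 ⟨v, hvQ, hv⟩
      · obtain ⟨u, hu, -, hui⟩ := hQ v hvQ i hi (hv ▸ hlt)
        exact Finset.mem_image.2 ⟨u, hu, hui⟩
    simpa using Finset.card_le_card hcolors

theorem stmt_12_general {α : Type*} (le : α → α → Prop) (hle : IsPartialOrder α le) (m w n : ℕ)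
    (hm : 0 < m) (hw : 0 < w) (hfree : LFree le m)
    (hwidth : ∀ S : Finset α, IsAntichainOn le S → S.card ≤ w)
    (g : α → ℕ) (hg : IsGrundy le n g) :
    (n : ℝ) ≤ (w : ℝ) ^
      (2.5 * Real.logb 2 (2 * (w : ℝ)) + 2 * Real.logb 2 (m : ℝ)) := by
  let : PartialOrder α :=
    { le := le
      le_refl := hle.refl
      le_trans := hle.trans
      le_antisymm := hle.antisymm }
  obtain ⟨k, rfl⟩ := Nat.exists_eq_add_one.2 hm
  obtain ⟨Q, hgQ, hn⟩ := IsGrundy.exists_grundyOn hg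
  have hQ : HasWidthLE Q w := fun S _ hanti =>
    hwidth S fun a ha b hb hab => ⟨hanti ha hb hab, hanti hb ha hab.symm⟩
  calc (n : ℝ) ≤ grundyBound (k + 1) w :=
        Nat.cast_le.2 (hn.trans (hgQ.card_image_le_grundyBound hQ hfree))
    _ ≤ firstFitBound (k + 1 : ℕ) w := grundyBound_le_firstFitBound hm hw

/-- every `n`-Grundy coloring of an `L_m`-free poset of width at
most `w` satisfies `n ≤ w^(2.5·lg(2w) + 2·lg m)`. -/
theorem stmt_12 {α : Type} [Fintype α] (le : α → α → Prop)
    (hle : IsPartialOrder α le) (m w n : ℕ) (hm : 0 < m) (hw : 0 < w)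
    (hfree : LFree le m)
    (hwidth : ∀ S : Finset α, IsAntichainOn le S → S.card ≤ w)
    (g : α → ℕ) (hg : IsGrundy le n g) :
    (n : ℝ) ≤ (w : ℝ) ^
      (2.5 * Real.logb 2 (2 * (w : ℝ)) + 2 * Real.logb 2 (m : ℝ)) := by
  exact stmt_12_general le hle m w n hm hw hfree hwidth g hg
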